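/- arXiv:2008.12457 — 2 statements merged into one kernel-verified Lean document; each statement's English description precedes it below -/
import Mathlib

section
/- Let F be a finite field with q elements, a ∈ F nonzero, and n = 2m with m ≥ 1. Writing g(ℓ) = ∏_{i=0}^{ℓ−1}(q^ℓ − q^i) for the order of GL(ℓ,F), the number of n×n matrices X over F satisfying X² = a•X equals 2 + g(2m)/g(m)² + Σ_{k=1}^{m−1} 2·g(2m)/(g(2m−k)·g(k)), where each of the displayed quotients is an integer (it is the index of a centralizer, hence an orbit size). -/
/-- `glOrder q ℓ = ∏_{i=0}^{ℓ-1} (q^ℓ - q^i)`, the order of `GL(ℓ, F_q)`. -/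
def glOrder (q ℓ : ℕ) : ℕ := ∏ i ∈ Finset.range ℓ, (q ^ ℓ - q ^ i)

open Matrix in
/-- conjugation-orbit description -/
lemma aux_conj {F : Type*} [Field F] (a : F) (ha : a ≠ 0) (r s : ℕ)
    (X : Matrix (Fin r ⊕ Fin s) (Fin r ⊕ Fin s) F) (hX : X * X = a • X) (hr : X.rank = r) :
    ∃ P : (Matrix (Fin r ⊕ Fin s) (Fin r ⊕ Fin s) F)ˣ,
      (P : Matrix (Fin r ⊕ Fin s) (Fin r ⊕ Fin s) F) * fromBlocks (a • 1) 0 0 0 = X * (P : Matrix (Fin r ⊕ Fin s) (Fin r ⊕ Fin s) F) := by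
  set f := Matrix.toLin' X with hf
  have hff : ∀ v, f (f v) = a • f v := by
    intro v
    have := congrArg (fun M => Matrix.toLin' M v) hX
    simpa [hf, Matrix.mulVec_mulVec, Matrix.smul_mulVec] using this
  have hR : Module.finrank F (LinearMap.range f) = r := hr
  have hK : Module.finrank F (LinearMap.ker f) = s := by
    have := LinearMap.finrank_range_add_finrank_ker f
    rw [hR] at this
    simp at this
    exact this
  have hC : IsCompl (LinearMap.range f) (LinearMap.ker f) := by
    constructor
    · rw [Submodule.disjoint_def]
      rintro x ⟨y, rfl⟩ hx
      rw [LinearMap.mem_ker, hff] at hx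
      exact (smul_eq_zero.mp hx).resolve_left ha
    · rw [codisjoint_iff, eq_top_iff]
      intro x _
      rw [Submodule.mem_sup]
      refine ⟨f (a⁻¹ • x), ⟨_, rfl⟩, x - f (a⁻¹ • x), ?_, by abel⟩
      rw [LinearMap.mem_ker, map_sub, hff, map_smul, smul_smul, mul_inv_cancel₀ ha, one_smul,
        sub_self]
  have e1 : (Fin r → F) ≃ₗ[F] LinearMap.range f :=
    LinearEquiv.ofFinrankEq _ _ (by rw [hR]; simp)
  have e2 : (Fin s → F) ≃ₗ[F] LinearMap.ker f :=
    LinearEquiv.ofFinrankEq _ _ (by rw [hK]; simp)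
  let e : (Fin r ⊕ Fin s → F) ≃ₗ[F] (Fin r ⊕ Fin s → F) :=
    (LinearEquiv.sumArrowLequivProdArrow (Fin r) (Fin s) F F).trans
      ((LinearEquiv.prodCongr e1 e2).trans (Submodule.prodEquivOfIsCompl _ _ hC))
  have he : ∀ v, e v = (e1 (v ∘ Sum.inl) : Fin r ⊕ Fin s → F) + e2 (v ∘ Sum.inr) := by
    intro v; rfl
  refine ⟨⟨LinearMap.toMatrix' e.toLinearMap, LinearMap.toMatrix' e.symm.toLinearMap, ?_, ?_⟩, ?_⟩
  · rw [← LinearMap.toMatrix'_comp]; simp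
  · rw [← LinearMap.toMatrix'_comp]; simp
  · apply Matrix.toLin'.injective
    apply LinearMap.ext
    intro v
    simp only [Matrix.toLin'_mul, Matrix.toLin'_toMatrix', LinearMap.comp_apply,
      LinearEquiv.coe_coe]
    rw [← hf, he v, map_add, he]
    have h2 : f (e2 (v ∘ Sum.inr)) = 0 := (e2 (v ∘ Sum.inr)).2
    have h1 : ∀ w, f (e1 w : Fin r ⊕ Fin s → F) = a • (e1 w : Fin r ⊕ Fin s → F) := by
      intro w
      obtain ⟨y, hy⟩ := (e1 w).2
      rw [← hy, hff]
    rw [h2, h1]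
    have h3 : (Matrix.toLin' (fromBlocks (a • 1 : Matrix (Fin r) (Fin r) F) 0 0
        (0 : Matrix (Fin s) (Fin s) F)) v) = Sum.elim (a • (v ∘ Sum.inl)) 0 := by
      rw [Matrix.toLin'_apply, Matrix.fromBlocks_mulVec]
      simp [Matrix.smul_mulVec]
    rw [h3]
    simp

lemma aux_glOrder (F : Type*) [Field F] [Fintype F] (n : ℕ) :
    Nat.card (Matrix (Fin n) (Fin n) F)ˣ = glOrder (Fintype.card F) n := by
  have := Matrix.card_GL_field (𝔽 := F) n
  rw [glOrder, Finset.prod_range]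
  exact this

open Matrix in
lemma aux_blocks {F : Type*} [Field F] (a : F) (ha : a ≠ 0) (r s : ℕ)
    (X : Matrix (Fin r ⊕ Fin s) (Fin r ⊕ Fin s) F)
    (h : X * fromBlocks (a • 1) 0 0 0 = fromBlocks (a • 1) 0 0 0 * X) :
    X = fromBlocks X.toBlocks₁₁ 0 0 X.toBlocks₂₂ := by
  rw [← fromBlocks_toBlocks X, fromBlocks_multiply, fromBlocks_multiply, fromBlocks_inj] at h
  conv_lhs => rw [← fromBlocks_toBlocks X]
  obtain ⟨-, h1, h2, -⟩ := h
  simp [ha] at h1 h2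
  rw [h2]
  congr 1
  simpa [eq_comm, ha] using h1

open Matrix in
lemma aux_stab {F : Type*} [Field F] [Fintype F] (a : F) (ha : a ≠ 0) (r s : ℕ) :
    Nat.card (MulAction.stabilizer (ConjAct (Matrix (Fin r ⊕ Fin s) (Fin r ⊕ Fin s) F)ˣ)
      (fromBlocks (a • 1) 0 0 0 : Matrix (Fin r ⊕ Fin s) (Fin r ⊕ Fin s) F)) =
    glOrder (Fintype.card F) r * glOrder (Fintype.card F) s := by
  rw [← aux_glOrder, ← aux_glOrder, ← Nat.card_prod]
  symm
  have hst : ∀ g : (Matrix (Fin r ⊕ Fin s) (Fin r ⊕ Fin s) F)ˣ,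
      ConjAct.toConjAct g ∈ MulAction.stabilizer
        (ConjAct (Matrix (Fin r ⊕ Fin s) (Fin r ⊕ Fin s) F)ˣ)
      (fromBlocks (a • 1) 0 0 0 : Matrix (Fin r ⊕ Fin s) (Fin r ⊕ Fin s) F) ↔
      (g : Matrix (Fin r ⊕ Fin s) (Fin r ⊕ Fin s) F) * fromBlocks (a • 1) 0 0 0 = fromBlocks (a • 1) 0 0 0 * (g : Matrix (Fin r ⊕ Fin s) (Fin r ⊕ Fin s) F) := by
    intro g
    rw [MulAction.mem_stabilizer_iff, ConjAct.units_smul_def, ConjAct.ofConjAct_toConjAct,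
      Units.mul_inv_eq_iff_eq_mul]
  let φ : (Matrix (Fin r) (Fin r) F)ˣ × (Matrix (Fin s) (Fin s) F)ˣ →
      (Matrix (Fin r ⊕ Fin s) (Fin r ⊕ Fin s) F)ˣ := fun p =>
    ⟨fromBlocks p.1 0 0 p.2, fromBlocks (p.1⁻¹ : (Matrix (Fin r) (Fin r) F)ˣ) 0 0
      (p.2⁻¹ : (Matrix (Fin s) (Fin s) F)ˣ), by
        rw [fromBlocks_multiply]; simp only [Units.mul_inv]; simp, by
        rw [fromBlocks_multiply]; simp only [Units.inv_mul]; simp⟩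
  refine Nat.card_congr (Equiv.ofBijective
    (fun p => ⟨ConjAct.toConjAct (φ p), (hst _).2 ?_⟩) ⟨?_, ?_⟩)
  · simp [φ, fromBlocks_multiply]
  · intro p p' h
    have h0 : φ p = φ p' := ConjAct.toConjAct.injective (Subtype.ext_iff.mp h)
    have h : fromBlocks (p.1 : Matrix (Fin r) (Fin r) F) 0 0 (p.2 : Matrix (Fin s) (Fin s) F) =
      fromBlocks (p'.1 : Matrix (Fin r) (Fin r) F) 0 0 (p'.2 : Matrix (Fin s) (Fin s) F) := congrArg Units.val h0
    rw [fromBlocks_inj] at h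
    exact Prod.ext (Units.ext h.1) (Units.ext h.2.2.2)
  · rintro ⟨g, hg⟩
    obtain ⟨g, rfl⟩ := ConjAct.toConjAct.surjective g
    have h1 := aux_blocks a ha r s _ ((hst g).1 hg)
    have h2 := aux_blocks a ha r s _ ((hst g⁻¹).1 (inv_mem hg))
    have h3 := g.mul_inv
    have h4 := g.inv_mul
    rw [h1, h2, fromBlocks_multiply, ← fromBlocks_one, fromBlocks_inj] at h3 h4
    simp only [Matrix.mul_zero, Matrix.zero_mul, add_zero, zero_add] at h3 h4
    refine ⟨(⟨_, _, h3.1, h4.1⟩, ⟨_, _, h3.2.2.2, h4.2.2.2⟩), ?_⟩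
    apply Subtype.ext
    apply congrArg ConjAct.toConjAct
    apply Units.ext
    exact h1.symm

open Matrix in
lemma aux_count (F : Type*) [Field F] [Fintype F] (a : F) (ha : a ≠ 0) (n r s : ℕ)
    (h : r + s = n) :
    Nat.card {X : Matrix (Fin n) (Fin n) F | X * X = a • X ∧ X.rank = r} *
      (glOrder (Fintype.card F) r * glOrder (Fintype.card F) s) = glOrder (Fintype.card F) n := by
  classical
  subst h
  set D : Matrix (Fin r ⊕ Fin s) (Fin r ⊕ Fin s) F := fromBlocks (a • 1) 0 0 0 with hD
  have hDr : D.rank = r := by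
    have : D = Matrix.diagonal (Sum.elim (fun _ => a) (fun _ => 0)) := by
      rw [hD, ← fromBlocks_diagonal, ← Matrix.smul_one_eq_diagonal, Matrix.diagonal_zero]
    rw [this, Matrix.rank_diagonal]
    rw [Fintype.card_congr (β := Fin r)]
    · simp
    · refine ⟨fun x => match x with
        | ⟨.inl i, _⟩ => i
        | ⟨.inr i, h⟩ => absurd rfl h, fun i => ⟨.inl i, by simpa using ha⟩, ?_, ?_⟩
      · rintro ⟨i | i, h⟩
        · rfl
        · exact absurd rfl h
      · intro i; rfl
  have hDD : D * D = a • D := by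
    simp [hD, fromBlocks_multiply, fromBlocks_smul]
  have horb : MulAction.orbit (ConjAct (Matrix (Fin r ⊕ Fin s) (Fin r ⊕ Fin s) F)ˣ) D =
      {X | X * X = a • X ∧ X.rank = r} := by
    ext X
    constructor
    · rintro ⟨g, rfl⟩
      obtain ⟨g, rfl⟩ := ConjAct.toConjAct.surjective g
      simp only [ConjAct.units_smul_def, ConjAct.ofConjAct_toConjAct, Set.mem_ofPred_eq]
      constructor
      · calc _ = (g : Matrix (Fin r ⊕ Fin s) (Fin r ⊕ Fin s) F) * D * (((g⁻¹ : (Matrix (Fin r ⊕ Fin s) (Fin r ⊕ Fin s) F)ˣ) : Matrix (Fin r ⊕ Fin s) (Fin r ⊕ Fin s) F) * (g : Matrix (Fin r ⊕ Fin s) (Fin r ⊕ Fin s) F)) * D *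
              ((g⁻¹ : (Matrix (Fin r ⊕ Fin s) (Fin r ⊕ Fin s) F)ˣ) : Matrix (Fin r ⊕ Fin s) (Fin r ⊕ Fin s) F) := by simp only [Matrix.mul_assoc]
          _ = _ := by
            rw [Units.inv_mul, Matrix.mul_one, Matrix.mul_assoc (g : Matrix (Fin r ⊕ Fin s) (Fin r ⊕ Fin s) F), hDD]
            simp
      · rw [Matrix.rank_mul_eq_left_of_isUnit_det, Matrix.rank_mul_eq_right_of_isUnit_det, hDr]
        · exact (Matrix.isUnit_iff_isUnit_det _).1 g.isUnit
        · exact (Matrix.isUnit_iff_isUnit_det _).1 (g⁻¹).isUnit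
    · rintro ⟨h1, h2⟩
      obtain ⟨P, hP⟩ := aux_conj a ha r s X h1 h2
      refine ⟨ConjAct.toConjAct P, ?_⟩
      simp only [ConjAct.units_smul_def, ConjAct.ofConjAct_toConjAct]
      rw [Units.mul_inv_eq_iff_eq_mul]
      exact hP
  have e1 : Nat.card {X : Matrix (Fin (r + s)) (Fin (r + s)) F | X * X = a • X ∧ X.rank = r} =
      Nat.card (MulAction.orbit (ConjAct (Matrix (Fin r ⊕ Fin s) (Fin r ⊕ Fin s) F)ˣ) D) := by
    rw [horb]
    refine Nat.card_congr (Equiv.subtypeEquiv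
      (Matrix.reindexAlgEquiv F F finSumFinEquiv.symm).toEquiv ?_)
    intro X
    apply and_congr
    · change _ ↔ Matrix.reindexAlgEquiv F F finSumFinEquiv.symm X *
        Matrix.reindexAlgEquiv F F finSumFinEquiv.symm X =
        a • Matrix.reindexAlgEquiv F F finSumFinEquiv.symm X
      rw [← map_mul, ← map_smul, EmbeddingLike.apply_eq_iff_eq]
    · change _ ↔ (Matrix.reindex finSumFinEquiv.symm finSumFinEquiv.symm X).rank = r
      rw [Matrix.rank_reindex]
  rw [e1, ← aux_stab a ha r s, ← aux_glOrder]
  rw [← Nat.card_prod, Nat.card_congr (MulAction.orbitProdStabilizerEquivGroup _ D)]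
  refine Nat.card_congr (ConjAct.ofConjAct.toEquiv.trans
    (Units.mapEquiv (Matrix.reindexAlgEquiv F F finSumFinEquiv).toMulEquiv).toEquiv)

lemma aux_sum (m : ℕ) (hm : 1 ≤ m) (c : ℕ → ℕ) (h0 : c 0 = 1)
    (hs : ∀ k ≤ 2 * m, c k = c (2 * m - k)) :
    ∑ k ∈ Finset.range (2 * m + 1), c k =
      2 + c m + ∑ k ∈ Finset.Icc 1 (m - 1), 2 * c k := by
  obtain ⟨l, rfl⟩ : ∃ l, m = l + 1 := ⟨m - 1, by omega⟩
  have h1 : ∑ k ∈ Finset.range (l + 1), c (l + 1 + 1 + k) = ∑ k ∈ Finset.range (l + 1), c k := by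
    rw [← Finset.sum_range_reflect]
    refine Finset.sum_congr rfl fun k hk => ?_
    rw [Finset.mem_range] at hk
    rw [hs k (by omega)]
    congr 1; omega
  have h2 : ∑ k ∈ Finset.range (l + 1), c k = 1 + ∑ k ∈ Finset.Icc 1 l, c k := by
    rw [Finset.range_eq_Ico, Finset.sum_eq_sum_Ico_succ_bot (by omega), h0]
    rfl
  rw [show 2 * (l + 1) + 1 = (l + 1 + 1) + (l + 1) by ring, Finset.sum_range_add, h1,
    Finset.sum_range_succ, h2, ← Finset.mul_sum]
  simp only [Nat.add_sub_cancel]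
  ring

theorem stmt_9 (F : Type*) [Field F] [Fintype F] (a : F) (ha : a ≠ 0) (m : ℕ) (hm : 1 ≤ m)
    (q : ℕ) (hq : q = Fintype.card F) :
    glOrder q m ^ 2 ∣ glOrder q (2 * m) ∧
    (∀ k ∈ Finset.Icc 1 (m - 1), glOrder q (2 * m - k) * glOrder q k ∣ glOrder q (2 * m)) ∧
    Nat.card {X : Matrix (Fin (2 * m)) (Fin (2 * m)) F | X * X = a • X} =
      2 + glOrder q (2 * m) / glOrder q m ^ 2 +
        ∑ k ∈ Finset.Icc 1 (m - 1),
          2 * (glOrder q (2 * m) / (glOrder q (2 * m - k) * glOrder q k)) := by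
  subst hq
  have hpos : ∀ n, 0 < glOrder (Fintype.card F) n := by
    intro n
    rw [← aux_glOrder]
    exact Nat.card_pos
  have key : ∀ k ≤ 2 * m, _ := fun k hk => aux_count F a ha (2 * m) k (2 * m - k) (by omega)
  set q := Fintype.card F
  refine ⟨?_, ?_, ?_⟩
  · have := aux_count F a ha (2 * m) m m (by omega)
    rw [sq]
    exact Dvd.intro_left _ this
  · intro k hk
    rw [Finset.mem_Icc] at hk
    rw [mul_comm (glOrder q (2 * m - k))]
    exact Dvd.intro_left _ (key k (by omega))
  · let c : ℕ → ℕ := fun k => glOrder q (2 * m) / (glOrder q (2 * m - k) * glOrder q k)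
    have hc : ∀ k ≤ 2 * m, Nat.card {X : Matrix (Fin (2 * m)) (Fin (2 * m)) F |
        X * X = a • X ∧ X.rank = k} = c k := by
      intro k hk
      simp only [c]
      rw [← key k hk, mul_comm (glOrder q (2 * m - k)), Nat.mul_div_cancel]
      exact Nat.mul_pos (hpos _) (hpos _)
    have hsum := aux_sum m hm c
      (by simp only [c]; simp [glOrder.eq_1 q 0, Nat.div_self (hpos _)])
      (by
        intro k hk
        simp only [c]
        rw [show 2 * m - (2 * m - k) = k by omega, mul_comm (glOrder q k)])
    have hcm : c m = glOrder q (2 * m) / glOrder q m ^ 2 := by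
      simp only [c]
      rw [show 2 * m - m = m by omega, sq]
    rw [← hcm, ← hsum]
    classical
    rw [Set.coe_ofPred, Nat.card_eq_fintype_card, Fintype.card_subtype,
      Finset.card_eq_sum_card_fiberwise (f := Matrix.rank) (t := Finset.range (2 * m + 1))]
    · refine Finset.sum_congr rfl fun k hk => ?_
      rw [← hc k (by rw [Finset.mem_range] at hk; omega), Set.coe_ofPred,
        Nat.card_eq_fintype_card, Fintype.card_subtype, Finset.filter_filter]
    · intro X _
      have := X.rank_le_width
      simp only [Finset.coe_range, Set.mem_Iio]
      omega
end

section
/- Let F be a finite field with q elements and let a ∈ F be nonzero. Then the number of 3×3 matrices X over F satisfying X² = a•X is exactly 2q²(q² + q + 1) + 2. -/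
namespace S18
open Matrix

abbrev P (F : Type*) := ((F × F) ⊕ F ⊕ Unit) × (F × F)

def U {F : Type*} [Field F] : P F → Fin 3 → F
  | (.inl (x, y), _) => ![1, x, y]
  | (.inr (.inl x), _) => ![0, 1, x]
  | (.inr (.inr _), _) => ![0, 0, 1]

def V {F : Type*} [Field F] (a : F) : P F → Fin 3 → F
  | (.inl (x, y), (s, t)) => ![a - x * s - y * t, s, t]
  | (.inr (.inl x), (s, t)) => ![s, a - x * t, t]
  | (.inr (.inr _), (s, t)) => ![s, t, a]

def G {F : Type*} [Field F] (a : F) : Option (P F) → Matrix (Fin 3) (Fin 3) F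
  | none => 0
  | some p => vecMulVec (U p) (V a p)

lemma dot {F : Type*} [Field F] (a : F) (p : P F) : V a p ⬝ᵥ U p = a := by
  rcases p with ⟨⟨x, y⟩ | x | _, s, t⟩ <;>
    simp [U, V, dotProduct, Fin.sum_univ_three] <;> ring

lemma G_sq {F : Type*} [Field F] (a : F) (p : Option (P F)) : G a p * G a p = a • G a p := by
  cases p with
  | none => simp [G]
  | some p =>
    ext i j
    have h := dot a p
    simp only [dotProduct, Fin.sum_univ_three] at h
    simp only [G, mul_apply, Fin.sum_univ_three, vecMulVec_apply, Matrix.smul_apply, smul_eq_mul]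
    linear_combination (U p i * V a p j) * h

lemma G_form {F : Type*} [Field F] (a : F) (p : Option (P F)) :
    ∃ u v, G a p = vecMulVec u v := by
  cases p with
  | none => exact ⟨0, 0, by simp [G]⟩
  | some p => exact ⟨_, _, rfl⟩

lemma G_add {F : Type*} [Field F] (a : F) (ha : a ≠ 0) (p r : Option (P F)) :
    G a p + G a r ≠ a • 1 := by
  obtain ⟨u, v, h⟩ := G_form a p
  obtain ⟨w, z, k⟩ := G_form a r
  rw [h, k]
  intro e
  have := congrArg det e
  rw [det_smul, det_one] at this
  simp [det_fin_three, vecMulVec_apply] at this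
  apply ha
  have h3 : a ^ 3 = 0 := by rw [← this]; ring
  exact pow_eq_zero_iff (by norm_num) |>.1 h3

lemma G_ne {F : Type*} [Field F] (a : F) (ha : a ≠ 0) (p : P F) :
    G a (some p) ≠ 0 := by
  intro e
  have h := congrArg trace e
  have h2 := dot a p
  simp only [dotProduct, Fin.sum_univ_three] at h2
  simp [G, trace, Fin.sum_univ_three, vecMulVec_apply] at h
  exact ha (by linear_combination h - h2)

lemma G_inj {F : Type*} [Field F] (a : F) (ha : a ≠ 0) : Function.Injective (G a) := by
  intro p r h
  rcases p with _ | p <;> rcases r with _ | r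
  · rfl
  · exact absurd h.symm (G_ne a ha r)
  · exact absurd h (G_ne a ha p)
  have e : ∀ i j, U p i * V a p j = U r i * V a r j := fun i j => congrFun (congrFun h i) j
  have key : ∃ c, ∀ i, a * U p i = c * U r i := by
    refine ⟨V a r ⬝ᵥ U p, fun i => ?_⟩
    have h2 := dot a p
    simp only [dotProduct, Fin.sum_univ_three] at h2 ⊢
    linear_combination -U p i * h2 + U p 0 * e i 0 + U p 1 * e i 1 + U p 2 * e i 2
  obtain ⟨c, hc⟩ := key
  have c0 := hc 0
  have c1 := hc 1
  have c2 := hc 2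
  congr 1
  rcases p with ⟨⟨x, y⟩ | x | _, s, t⟩ <;> rcases r with ⟨⟨x', y'⟩ | x' | _, s', t'⟩ <;>
    simp [U, V, Fin.forall_fin_succ, ha] at e c0 c1 c2 ⊢ <;> grind

lemma exists_G {F : Type*} [Field F] (a : F) (X : Matrix (Fin 3) (Fin 3) F)
    (hX : X * X = a • X) (hr : X.rank ≤ 1) : ∃ p, G a p = X := by
  by_cases h0 : X = 0
  · exact ⟨none, h0.symm⟩
  obtain ⟨⟨u, hu⟩, hv⟩ := finrank_le_one_iff.1 hr
  have hcol : ∀ j, ∃ c : F, ∀ i, X i j = c * u i := by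
    intro j
    obtain ⟨c, hc⟩ := hv ⟨X.mulVecLin (Pi.single j 1), ⟨_, rfl⟩⟩
    refine ⟨c, fun i => ?_⟩
    have := congrFun (congrArg Subtype.val hc) i
    simpa using this.symm
  choose v hv using hcol
  have hd : v 0 * u 0 + v 1 * u 1 + v 2 * u 2 = a := by
    have : ∃ i j, X i j ≠ 0 := by
      by_contra! hh
      exact h0 (by ext i j; simpa using hh i j)
    obtain ⟨i, j, hij⟩ := this
    have := congrFun (congrFun hX i) j
    simp only [mul_apply, Fin.sum_univ_three, Matrix.smul_apply, smul_eq_mul] at this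
    apply mul_right_cancel₀ hij
    rw [← this]
    simp only [hv]
    ring
  by_cases u0 : u 0 = 0
  · by_cases u1 : u 1 = 0
    · have u2 : u 2 ≠ 0 := by
        intro u2
        apply h0
        ext i j
        rw [hv]
        fin_cases i <;> simp [*]
      refine ⟨some (.inr (.inr ()), (u 2 * v 0, u 2 * v 1)), ?_⟩
      ext i j
      rw [hv]
      subst hd
      fin_cases i <;> fin_cases j <;> simp [G, U, V, vecMulVec_apply, u0, u1] <;> ring
    · refine ⟨some (.inr (.inl (u 2 / u 1)), (u 1 * v 0, u 1 * v 2)), ?_⟩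
      ext i j
      rw [hv]
      subst hd
      fin_cases i <;> fin_cases j <;> simp [G, U, V, vecMulVec_apply, u0] <;> field_simp <;> ring
  · refine ⟨some (.inl (u 1 / u 0, u 2 / u 0), (u 0 * v 1, u 0 * v 2)), ?_⟩
    ext i j
    rw [hv]
    subst hd
    fin_cases i <;> fin_cases j <;> simp [G, U, V, vecMulVec_apply] <;> field_simp <;> ring

lemma compl_sq {F : Type*} [Field F] (a : F) (X : Matrix (Fin 3) (Fin 3) F)
    (hX : X * X = a • X) : (a • 1 - X) * (a • 1 - X) = a • (a • 1 - X) := by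
  simp [sub_mul, mul_sub, hX, smul_sub]

lemma rank_or {F : Type*} [Field F] (a : F) (X : Matrix (Fin 3) (Fin 3) F)
    (hX : X * X = a • X) : X.rank ≤ 1 ∨ (a • 1 - X).rank ≤ 1 := by
  have h : X * (a • 1 - X) = 0 := by simp [mul_sub, hX]
  have := Matrix.rank_add_rank_le_card_of_mul_eq_zero h
  simp at this
  omega

def Φ {F : Type*} [Field F] (a : F) (x : Bool × Option (P F)) :
    {X : Matrix (Fin 3) (Fin 3) F | X * X = a • X} :=
  match x with
  | (false, p) => ⟨G a p, G_sq a p⟩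
  | (true, p) => ⟨a • 1 - G a p, compl_sq a _ (G_sq a p)⟩

lemma Φ_bij {F : Type*} [Field F] (a : F) (ha : a ≠ 0) : Function.Bijective (Φ a) := by
  constructor
  · rintro ⟨_ | _, p⟩ ⟨_ | _, r⟩ h <;> have h := congrArg Subtype.val h <;> simp only [Φ] at h
    · rw [G_inj a ha h]
    · exact absurd (eq_sub_iff_add_eq.1 h) (G_add a ha _ _)
    · exact absurd (eq_sub_iff_add_eq.1 h.symm) (G_add a ha _ _)
    · rw [G_inj a ha (sub_right_injective h)]
  · rintro ⟨X, hX⟩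
    rcases rank_or a X hX with h | h
    · obtain ⟨p, hp⟩ := exists_G a X hX h
      exact ⟨(false, p), Subtype.ext hp⟩
    · obtain ⟨p, hp⟩ := exists_G a _ (compl_sq a X hX) h
      exact ⟨(true, p), Subtype.ext (by simp [Φ, hp])⟩

end S18

theorem stmt_18 (F : Type*) [Field F] [Fintype F] (a : F) (ha : a ≠ 0) :
    Nat.card {X : Matrix (Fin 3) (Fin 3) F | X * X = a • X} =
      2 * Fintype.card F ^ 2 * (Fintype.card F ^ 2 + Fintype.card F + 1) + 2 := by
  rw [← Nat.card_congr (Equiv.ofBijective _ (S18.Φ_bij a ha)), Nat.card_eq_fintype_card]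
  simp only [Fintype.card_prod, Fintype.card_option, Fintype.card_sum, Fintype.card_bool,
    Fintype.card_unit]
  ring
end
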